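/- There is a constant C > 0 such that for all positive integers m ≤ n with n^{11/12}·(log n)^5 ≤ m (log the natural logarithm), the number of C₄-free bipartite graphs with parts of sizes m and n (i.e., the number of edge sets E ⊆ U × V with |U| = m, |V| = n that are C₄-free) is at most 2^{C·m·n^{1/2}}. -/

import Mathlib

open scoped Classical

/-- The number of `C₄`-free bipartite graphs with parts of sizes `m` and `n`,
i.e. the number of edge sets `E ⊆ U × V` (`|U| = m`, `|V| = n`) containing no
four pairs `(u,v), (u,v'), (u',v), (u',v')` with `u ≠ u'`, `v ≠ v'`. -/
noncomputable def c4FreeCount (m n : ℕ) : ℕ :=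
  ((Finset.univ : Finset (Fin m × Fin n)).powerset.filter
    (fun E => ¬ ∃ (u u' : Fin m) (v v' : Fin n), u ≠ u' ∧ v ≠ v' ∧
      (u, v) ∈ E ∧ (u, v') ∈ E ∧ (u', v) ∈ E ∧ (u', v') ∈ E)).card


lemma card_weighted {α : Type*} [DecidableEq α] (P : Finset α) (c : α → ℝ) (Q : ℝ) :
    ((P.powerset.filter (fun G => ∑ e ∈ G, c e ≤ Q)).card : ℝ) ≤
      Real.exp (Q + ∑ e ∈ P, Real.exp (-c e)) := by
  have h1 : ((P.powerset.filter (fun G => ∑ e ∈ G, c e ≤ Q)).card : ℝ) ≤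
      ∑ G ∈ P.powerset, Real.exp Q * ∏ e ∈ G, Real.exp (-c e) := by
    rw [Finset.card_eq_sum_ones, Nat.cast_sum, Finset.sum_filter]
    apply Finset.sum_le_sum
    intro G _
    rw [← Real.exp_sum, ← Real.exp_add]
    split_ifs with h
    · rw [Nat.cast_one]
      apply Real.one_le_exp
      rw [Finset.sum_neg_distrib]; linarith
    · positivity
  refine h1.trans ?_
  rw [← Finset.mul_sum, Real.exp_add, Real.exp_sum]
  rw [← Finset.prod_one_add]
  gcongr with i hi
  have := Real.add_one_le_exp (Real.exp (-c i))
  linarith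

lemma kw {V : Type*} [DecidableEq V] (H : V → V → Prop) (w : V → ℝ) (W : ℝ)
    (B : ℕ) (hB : 1 ≤ B) :
    ∀ (k : ℕ) (A : Finset V) (t : ℕ), A.card = k → (A.card : ℝ) * (1 - 1 / B) ^ t < 1 →
      (∀ A' ⊆ A, W < ∑ v ∈ A', w v → ∃ v ∈ A', (A'.card : ℝ) ≤ B * (A'.filter (H v)).card) →
      ∃ C : Finset V → Finset V, ∀ I ⊆ A, (∀ x ∈ I, ∀ y ∈ I, ¬ H x y) →
        ∃ T ⊆ I, T.card ≤ t ∧ ∑ v ∈ C T, w v ≤ W ∧ I ⊆ T ∪ C T := by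
  intro k
  induction k using Nat.strong_induction_on with
  | _ k ih =>
  intro A t hk ht hd
  by_cases hA : ∑ v ∈ A, w v ≤ W
  · exact ⟨fun _ => A, fun I hI _ => ⟨∅, by simp, by simp, hA, by simpa using hI⟩⟩
  push Not at hA
  obtain ⟨v, hv, hvd⟩ := hd A subset_rfl hA
  have hBr : (1:ℝ) ≤ B := by exact_mod_cast hB
  have h01 : 0 ≤ 1 - 1 / (B:ℝ) := by
    rw [sub_nonneg, div_le_one (by linarith)]; exact hBr
  have hcv : (A.erase v).card < k := by
    rw [← hk]; exact Finset.card_erase_lt_of_mem hv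
  obtain ⟨C1, hC1⟩ := ih _ hcv (A.erase v) t rfl (lt_of_le_of_lt (by
      gcongr; exact Finset.erase_subset _ _) ht)
      (fun A' h => hd A' (h.trans (Finset.erase_subset _ _)))
  cases t with
  | zero =>
    exfalso
    have : 0 < A.card := Finset.card_pos.2 ⟨v, hv⟩
    have h2 : (1:ℝ) ≤ A.card := by exact_mod_cast this
    simp at ht
    rw [ht] at hv; simp at hv
  | succ t =>
    set A2 := (A.erase v).filter (fun x => ¬ H v x) with hA2
    have hA2s : A2 ⊆ A.erase v := Finset.filter_subset _ _
    have hc2 : (A2.card : ℝ) ≤ A.card * (1 - 1 / B) := by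
      have h3 : A2.card + (A.filter (H v)).card ≤ A.card := by
        rw [add_comm, ← Finset.card_filter_add_card_filter_not (s := A) (H v)]
        have h6 : A2 ⊆ A.filter (fun x => ¬ H v x) :=
          Finset.filter_subset_filter _ (Finset.erase_subset _ _)
        have h7 := Finset.card_le_card h6
        omega
      have h4 : (A2.card : ℝ) + (A.filter (H v)).card ≤ A.card := by exact_mod_cast h3
      have h5 : (A.card : ℝ) / B ≤ (A.filter (H v)).card := by
        rw [div_le_iff₀ (by linarith)]; linarith
      have : (A.card : ℝ) * (1 - 1 / B) = A.card - A.card / B := by ring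
      linarith
    obtain ⟨C2, hC2⟩ := ih A2.card (lt_of_le_of_lt (Finset.card_le_card hA2s) hcv) A2 t rfl
      (by
        refine lt_of_le_of_lt ?_ ht
        rw [pow_succ']
        calc (A2.card : ℝ) * (1 - 1 / B) ^ t ≤ A.card * (1 - 1 / B) * (1 - 1 / B) ^ t := by gcongr
          _ = _ := by ring)
      (fun A' h => hd A' ((h.trans hA2s).trans (Finset.erase_subset _ _)))
    refine ⟨fun T => if v ∈ T then C2 (T.erase v) else C1 T, ?_⟩
    intro I hI hind
    by_cases hvI : v ∈ I
    · obtain ⟨T, hT, hTc, hTw, hTI⟩ := hC2 (I.erase v) (by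
        intro x hx
        rw [Finset.mem_erase] at hx
        simp only [hA2, Finset.mem_filter, Finset.mem_erase]
        exact ⟨⟨hx.1, hI hx.2⟩, hind v hvI x hx.2⟩)
        (fun x hx y hy => hind x (Finset.mem_of_mem_erase hx) y (Finset.mem_of_mem_erase hy))
      have hvT : v ∉ T := fun h => by simpa using hT h
      refine ⟨insert v T, ?_, ?_, ?_, ?_⟩
      · intro x hx
        rcases Finset.mem_insert.1 hx with rfl | hx
        · exact hvI
        · exact Finset.mem_of_mem_erase (hT hx)
      · rw [Finset.card_insert_of_notMem hvT]; omega
      · simpa [Finset.erase_insert hvT] using hTw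
      · simp only [Finset.mem_insert_self, if_true, Finset.erase_insert hvT]
        intro x hx
        by_cases hxv : x = v
        · simp [hxv]
        · have := hTI (Finset.mem_erase.2 ⟨hxv, hx⟩)
          simp only [Finset.mem_union, Finset.mem_insert] at this ⊢
          tauto
    · obtain ⟨T, hT, hTc, hTw, hTI⟩ := hC1 I (by
        intro x hx
        rw [Finset.mem_erase]
        exact ⟨fun h => hvI (h ▸ hx), hI hx⟩) hind
      have hvT : v ∉ T := fun h => hvI (hT h)
      exact ⟨T, hT, hTc, by simpa [hvT] using hTw, by simpa [hvT] using hTI⟩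

lemma core {α β : Type*} [DecidableEq α] [DecidableEq β] (R : α → β → Prop)
    (hR : ∀ u u' v v', u ≠ u' → v ≠ v' → R u v → R u v' → R u' v → R u' v' → False)
    (t : Finset α) (A : Finset β) :
    ∑ u ∈ t, ((A.filter (R u)).card : ℝ) ^ 2 ≤
      ∑ v ∈ A, ((A.filter (fun v' => v ≠ v' ∧ ∃ u ∈ t, R u v ∧ R u v')).card : ℝ)
        + ∑ u ∈ t, ((A.filter (R u)).card : ℝ) := by
  have hcard : ∀ u, ((A.filter (R u)).card : ℝ) = ∑ v ∈ A, if R u v then (1:ℝ) else 0 := by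
    intro u; simp
  have hL : ∑ u ∈ t, ((A.filter (R u)).card : ℝ) ^ 2 =
      ∑ v ∈ A, ∑ v' ∈ A, ((t.filter (fun u => R u v ∧ R u v')).card : ℝ) := by
    have : ∀ v v', ((t.filter (fun u => R u v ∧ R u v')).card : ℝ)
        = ∑ u ∈ t, (if R u v then (1:ℝ) else 0) * (if R u v' then (1:ℝ) else 0) := by
      intro v v'
      rw [Finset.card_filter]
      push_cast
      apply Finset.sum_congr rfl
      intro u _
      split_ifs <;> simp_all
    simp_rw [this, hcard, sq, Finset.sum_mul_sum]
    rw [Finset.sum_comm]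
    apply Finset.sum_congr rfl
    intro v _
    rw [Finset.sum_comm]
  have hS : ∑ u ∈ t, ((A.filter (R u)).card : ℝ) =
      ∑ v ∈ A, ((t.filter (fun u => R u v)).card : ℝ) := by
    simp_rw [hcard]
    rw [Finset.sum_comm]
    apply Finset.sum_congr rfl
    intro v _
    simp
  rw [hL, hS, ← Finset.sum_add_distrib]
  apply Finset.sum_le_sum
  intro v hv
  have : ((t.filter (fun u => R u v)).card : ℝ) =
      ∑ v' ∈ A, if v' = v then ((t.filter (fun u => R u v)).card : ℝ) else 0 := by
    simp [hv]
  rw [this, Finset.card_filter]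
  push_cast
  rw [← Finset.sum_add_distrib]
  apply Finset.sum_le_sum
  intro v' hv'
  by_cases hvv : v' = v
  · subst hvv; simp
  · have h1 : (t.filter (fun u => R u v ∧ R u v')).card ≤ 1 := by
      rw [Finset.card_le_one]
      intro a ha b hb
      simp only [Finset.mem_filter] at ha hb
      by_contra hab
      exact hR a b v v' hab (Ne.symm hvv) ha.2.1 ha.2.2 hb.2.1 hb.2.2
    by_cases hH : ∃ u ∈ t, R u v ∧ R u v'
    · rw [if_pos ⟨Ne.symm hvv, hH⟩, if_neg hvv, add_zero]
      exact_mod_cast h1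
    · have : t.filter (fun u => R u v ∧ R u v') = ∅ := by
        rw [Finset.filter_eq_empty_iff]
        intro u hu h
        exact hH ⟨u, hu, h⟩
      rw [this]
      simp only [Finset.card_empty, Nat.cast_zero]
      positivity

lemma density_arith (w0 a w D t B : ℝ) (h0 : 0 < w0) (ha : 0 ≤ a) (ht : 0 ≤ t) (hD0 : 0 ≤ D)
    (h1 : w ^ 2 ≤ t * (D + w)) (hwA : w0 * a ≤ w) (hA : 2 * t < w) (hB : 2 * t ≤ B * w0 ^ 2)
    (hBD : B * D < a * a) : False := by
  have h2 : w ^ 2 ≤ 2 * t * D := by nlinarith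
  have h3 : (w0 * a) ^ 2 ≤ w ^ 2 := by gcongr
  have h4 : 2 * t * D ≤ B * w0 ^ 2 * D := by gcongr
  have h5 : w0 ^ 2 * (a * a) ≤ w0 ^ 2 * (B * D) := by nlinarith
  have := le_of_mul_le_mul_left h5 (by positivity)
  linarith

lemma density {α β : Type*} [DecidableEq α] [DecidableEq β] (R : α → β → Prop)
    (hR : ∀ u u' v v', u ≠ u' → v ≠ v' → R u v → R u v' → R u' v → R u' v' → False)
    (t : Finset α) (A : Finset β) (w0 B : ℝ) (h0 : 0 < w0)
    (hw : ∀ v ∈ A, w0 ≤ ((t.filter (fun u => R u v)).card : ℝ))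
    (hA : 2 * (t.card : ℝ) < ∑ v ∈ A, ((t.filter (fun u => R u v)).card : ℝ))
    (hB : 2 * (t.card : ℝ) ≤ B * w0 ^ 2) :
    ∃ v ∈ A, (A.card : ℝ) ≤
      B * (A.filter (fun v' => v ≠ v' ∧ ∃ u ∈ t, R u v ∧ R u v')).card := by
  by_contra hcon
  push Not at hcon
  have hc := core R hR t A
  have hS : ∑ u ∈ t, ((A.filter (R u)).card : ℝ) =
      ∑ v ∈ A, ((t.filter (fun u => R u v)).card : ℝ) := by
    exact_mod_cast Finset.sum_card_bipartiteAbove_eq_sum_card_bipartiteBelow R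
  have hcs := sq_sum_le_card_mul_sum_sq (s := t) (f := fun u => ((A.filter (R u)).card : ℝ))
  rw [hS] at hc hcs
  set w := ∑ v ∈ A, ((t.filter (fun u => R u v)).card : ℝ) with hwdef
  set D := ∑ v ∈ A, ((A.filter (fun v' => v ≠ v' ∧ ∃ u ∈ t, R u v ∧ R u v')).card : ℝ) with hD
  have hne : A.Nonempty := by
    rw [Finset.nonempty_iff_ne_empty]
    rintro rfl
    rw [hwdef, Finset.sum_empty] at hA
    have : (0:ℝ) ≤ t.card := Nat.cast_nonneg _
    linarith
  have hBD : B * D < A.card * A.card := by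
    rw [hD, Finset.mul_sum]
    calc _ < ∑ v ∈ A, (A.card : ℝ) := Finset.sum_lt_sum_of_nonempty hne hcon
      _ = _ := by simp
  have hwA : w0 * A.card ≤ w := by
    rw [hwdef]
    calc w0 * A.card = ∑ v ∈ A, w0 := by simp [mul_comm]
      _ ≤ _ := Finset.sum_le_sum hw
  have ht : (0:ℝ) ≤ t.card := Nat.cast_nonneg _
  have hD0 : 0 ≤ D := Finset.sum_nonneg (fun _ _ => Nat.cast_nonneg _)
  have h1 : w ^ 2 ≤ t.card * (D + w) := hcs.trans (mul_le_mul_of_nonneg_left hc ht)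
  exact density_arith _ _ _ _ _ _ h0 (Nat.cast_nonneg _) ht hD0 h1 hwA hA hB hBD

lemma kst {m n : ℕ} (E : Finset (Fin m × Fin n))
    (hE : ∀ u u' v v', u ≠ u' → v ≠ v' → (u, v) ∈ E → (u, v') ∈ E → (u', v) ∈ E → (u', v') ∈ E →
      False) (s : ℝ) (hs : 0 ≤ s) (hsn : s ^ 2 = n) : (E.card : ℝ) ≤ m * s + n := by
  obtain ⟨R, hRE⟩ : ∃ R : Fin n → Fin m → Prop, ∀ v u, R v u ↔ (u, v) ∈ E :=
    ⟨fun v u => (u, v) ∈ E, fun _ _ => Iff.rfl⟩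
  have hc := core R (fun v v' u u' h1 h2 a b c d => hE u u' v v' h2 h1
    ((hRE _ _).1 a) ((hRE _ _).1 c) ((hRE _ _).1 b) ((hRE _ _).1 d)) Finset.univ Finset.univ
  have hS : ∑ v : Fin n, ((Finset.univ.filter (R v)).card : ℝ) = E.card := by
    rw [Finset.card_eq_sum_card_fiberwise (f := Prod.snd) (t := Finset.univ) (by simp)]
    push_cast
    apply Finset.sum_congr rfl
    intro v _
    norm_cast
    apply Finset.card_bij (fun u _ => (u, v))
    · simp [hRE]
    · simp
    · rintro ⟨u, v'⟩ h
      simp at h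
      obtain ⟨h, rfl⟩ := h
      exact ⟨u, by simpa [hRE] using h, rfl⟩
  have hcs := sq_sum_le_card_mul_sum_sq (s := (Finset.univ : Finset (Fin n)))
    (f := fun v => ((Finset.univ.filter (R v)).card : ℝ))
  rw [hS] at hc hcs
  have hD : ∑ v : Fin n, ((Finset.univ.filter (R v)).card : ℝ) ^ 2 ≤ m * m + E.card := by
    refine hc.trans (add_le_add ?_ le_rfl)
    calc _ ≤ ∑ u : Fin m, (m : ℝ) := by
          apply Finset.sum_le_sum
          intro u _
          norm_cast
          exact (Finset.card_le_univ _).trans (by simp)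
      _ = _ := by simp
  have h1 : (E.card : ℝ) ^ 2 ≤ n * (m * m + E.card) := by
    refine hcs.trans ?_
    simp only [Finset.card_univ, Fintype.card_fin]
    gcongr
  by_contra hcon
  push Not at hcon
  have hm : (0:ℝ) ≤ m := by positivity
  have hn : (0:ℝ) ≤ n := by positivity
  have hms : 0 ≤ m * s := by positivity
  have : (m * s) * (m * s) < E.card * (E.card - n) := by nlinarith
  have h6 : (m * s) * (m * s) = n * (m * m) := by rw [← hsn]; ring
  nlinarith

noncomputable def mu {m : ℕ} (p : ℝ) (t : Finset (Fin m)) : ℝ :=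
  (∏ _i ∈ t, p) * ∏ _i ∈ Finset.univ \ t, (1 - p)

lemma mu_prod {m : ℕ} (p : ℝ) (z : Fin m → ℝ) :
    ∑ t : Finset (Fin m), mu p t * ∏ i ∈ t, z i = ∏ i, (p * z i + (1 - p)) := by
  rw [Finset.prod_add, Finset.powerset_univ]
  apply Finset.sum_congr rfl
  intro t _
  rw [mu, Finset.prod_mul_distrib]; ring

lemma mu_one {m : ℕ} (p : ℝ) : ∑ t : Finset (Fin m), mu p t = 1 := by
  have := mu_prod (m := m) p (fun _ => 1)
  simpa using this

lemma mu_mem {m : ℕ} (p : ℝ) (u : Fin m) :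
    ∑ t : Finset (Fin m), mu p t * (if u ∈ t then 1 else 0) = p := by
  have h := mu_prod p (fun i => if i = u then (0:ℝ) else 1)
  have h1 : ∀ t : Finset (Fin m), ∏ i ∈ t, (if i = u then (0:ℝ) else 1)
      = 1 - (if u ∈ t then 1 else 0) := by
    intro t
    split_ifs with hu
    · rw [Finset.prod_eq_zero hu (by simp)]; simp
    · rw [Finset.prod_eq_one, sub_zero]
      intro i hi
      rw [if_neg]; rintro rfl; exact hu hi
  have h2 : ∏ i : Fin m, (p * (if i = u then (0:ℝ) else 1) + (1 - p)) = 1 - p := by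
    rw [Finset.prod_eq_single u]
    · simp
    · intro b _ hb; simp [hb]
    · simp
  rw [h2] at h
  simp_rw [h1, mul_sub, Finset.sum_sub_distrib, mul_one] at h
  rw [mu_one] at h
  linarith

lemma mu_nonneg {m : ℕ} (p : ℝ) (h0 : 0 ≤ p) (h1 : p ≤ 1) (t : Finset (Fin m)) : 0 ≤ mu p t := by
  have : 0 ≤ 1 - p := by linarith
  unfold mu; positivity

lemma mu_fail {m : ℕ} (K : ℕ) (hK : 1 ≤ K) (N : Finset (Fin m)) :
    ∑ t : Finset (Fin m), mu (1 / (K:ℝ)) t *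
      (if 2 * (K:ℝ) * (t.filter (· ∈ N)).card < N.card then (N.card : ℝ) else 0) ≤ 8 * K := by
  have hKr : (1:ℝ) ≤ K := by exact_mod_cast hK
  set p : ℝ := 1 / K with hp
  have hp0 : 0 ≤ p := by positivity
  have hp1 : p ≤ 1 := by rw [hp, div_le_one (by linarith)]; exact hKr
  set x : ℝ := N.card / (2 * K) with hx
  have hx0 : 0 ≤ x := by positivity
  have hNx : 2 * K * x = (N.card : ℝ) := by rw [hx]; field_simp
  have hl2 := Real.log_two_lt_d9
  have hl2' : 0 < Real.log 2 := Real.log_pos (by norm_num)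
  have h1 : ∀ t : Finset (Fin m), (if 2 * (K:ℝ) * (t.filter (· ∈ N)).card < N.card then (N.card : ℝ) else 0)
      ≤ N.card * Real.exp (x * Real.log 2) * ∏ i ∈ t, (if i ∈ N then (1/2:ℝ) else 1) := by
    intro t
    split_ifs with h
    · have : ∏ i ∈ t, (if i ∈ N then (1/2:ℝ) else 1) = Real.exp (-((t.filter (· ∈ N)).card * Real.log 2)) := by
        rw [← Finset.prod_filter, Finset.prod_const, Real.exp_neg, Real.exp_nat_mul,
          Real.exp_log (by norm_num)]
        simp
      rw [this, mul_assoc, ← Real.exp_add]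
      apply le_mul_of_one_le_right (by positivity)
      apply Real.one_le_exp
      have : ((t.filter (· ∈ N)).card : ℝ) ≤ x := by
        rw [hx, le_div_iff₀ (by positivity)]; linarith
      nlinarith
    · have : 0 ≤ ∏ i ∈ t, (if i ∈ N then (1/2:ℝ) else 1) := by
        apply Finset.prod_nonneg; intro i _; split_ifs <;> norm_num
      positivity
  have h2 : ∏ i : Fin m, (p * (if i ∈ N then (1/2:ℝ) else 1) + (1 - p)) ≤ Real.exp (-x) := by
    have : ∀ i : Fin m, (p * (if i ∈ N then (1/2:ℝ) else 1) + (1 - p)) = if i ∈ N then 1 - p / 2 else 1 := by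
      intro i; split_ifs <;> ring
    simp_rw [this]
    rw [← Finset.prod_filter, Finset.prod_const, Finset.filter_mem_eq_inter, Finset.univ_inter]
    have h3 : 1 - p / 2 ≤ Real.exp (-(p/2)) := by
      have := Real.add_one_le_exp (-(p/2)); linarith
    calc (1 - p/2) ^ N.card ≤ (Real.exp (-(p/2))) ^ N.card := by
          gcongr; linarith
      _ = Real.exp (-x) := by
          rw [← Real.exp_nat_mul]; congr 1; rw [← hNx, hp]; field_simp
  calc _ ≤ ∑ t : Finset (Fin m), mu p t * (N.card * Real.exp (x * Real.log 2) * ∏ i ∈ t, (if i ∈ N then (1/2:ℝ) else 1)) := by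
        apply Finset.sum_le_sum
        intro t _
        exact mul_le_mul_of_nonneg_left (h1 t) (mu_nonneg p hp0 hp1 t)
    _ = N.card * Real.exp (x * Real.log 2) * ∏ i : Fin m, (p * (if i ∈ N then (1/2:ℝ) else 1) + (1 - p)) := by
        rw [← mu_prod, Finset.mul_sum]
        apply Finset.sum_congr rfl
        intro t _; ring
    _ ≤ N.card * Real.exp (x * Real.log 2) * Real.exp (-x) := by gcongr
    _ = 2 * K * (x * Real.exp (-(x * (1 - Real.log 2)))) := by
        rw [mul_assoc, ← Real.exp_add, ← hNx]
        ring_nf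
    _ ≤ 2 * K * 4 := by
        gcongr
        rw [Real.exp_neg, ← div_eq_mul_inv, div_le_iff₀ (Real.exp_pos _)]
        have := Real.add_one_le_exp (x * (1 - Real.log 2))
        nlinarith
    _ = 8 * K := by ring

lemma exists_t {m n : ℕ} (hm : 0 < m) (hn : 0 < n) (E : Finset (Fin m × Fin n)) (K : ℕ) (hK : 1 ≤ K)
    (Z : ℝ) (hZ0 : 0 < Z) (hZ : (E.card : ℝ) ≤ Z) :
    ∃ t : Finset (Fin m), (t.card : ℝ) * K ≤ 3 * m ∧
      ((E.filter (fun e => e.1 ∈ t)).card : ℝ) * K ≤ 3 * Z ∧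
      ∑ v : Fin n, (if 2 * (K:ℝ) * (t.filter (fun u => (u, v) ∈ E)).card <
        (Finset.univ.filter (fun u : Fin m => (u, v) ∈ E)).card then
          ((Finset.univ.filter (fun u : Fin m => (u, v) ∈ E)).card : ℝ) else 0) ≤ 24 * K * n := by
  have hKr : (1:ℝ) ≤ K := by exact_mod_cast hK
  have hmr : (0:ℝ) < m := by exact_mod_cast hm
  have hnr : (0:ℝ) < n := by exact_mod_cast hn
  set p : ℝ := 1 / K with hp
  have hpK : p * K = 1 := by rw [hp]; field_simp
  have hp0 : 0 ≤ p := by positivity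
  have hp1 : p ≤ 1 := by rw [hp, div_le_one (by linarith)]; exact hKr
  set a : Finset (Fin m) → ℝ := fun t => (t.card : ℝ) with ha
  set b : Finset (Fin m) → ℝ := fun t => ((E.filter (fun e => e.1 ∈ t)).card : ℝ) with hb
  set c : Finset (Fin m) → ℝ := fun t => ∑ v : Fin n, (if 2 * (K:ℝ) * (t.filter (fun u => (u, v) ∈ E)).card <
        (Finset.univ.filter (fun u : Fin m => (u, v) ∈ E)).card then
          ((Finset.univ.filter (fun u : Fin m => (u, v) ∈ E)).card : ℝ) else 0) with hc
  have Ea : ∑ t, mu p t * a t = m * p := by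
    have : ∀ t : Finset (Fin m), a t = ∑ u : Fin m, if u ∈ t then (1:ℝ) else 0 := by
      intro t; simp [ha]
    simp_rw [this, Finset.mul_sum]
    rw [Finset.sum_comm]
    simp_rw [mu_mem]
    simp
  have Eb : ∑ t, mu p t * b t = E.card * p := by
    have : ∀ t : Finset (Fin m), b t = ∑ e ∈ E, if e.1 ∈ t then (1:ℝ) else 0 := by
      intro t; simp [hb]
    simp_rw [this, Finset.mul_sum]
    rw [Finset.sum_comm]
    simp_rw [mu_mem]
    simp
  have Ec : ∑ t, mu p t * c t ≤ n * (8 * K) := by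
    simp_rw [hc, Finset.mul_sum]
    rw [Finset.sum_comm]
    calc _ ≤ ∑ v : Fin n, 8 * (K:ℝ) := by
          apply Finset.sum_le_sum
          intro v _
          have := mu_fail K hK (Finset.univ.filter (fun u : Fin m => (u, v) ∈ E))
          simpa only [Finset.mem_filter, Finset.mem_univ, true_and] using this
      _ = _ := by simp
  have ha0 : ∀ t, 0 ≤ a t := fun t => by positivity
  have hb0 : ∀ t, 0 ≤ b t := fun t => by positivity
  have hc0 : ∀ t, 0 ≤ c t := fun t => by
    apply Finset.sum_nonneg; intro v _; split_ifs <;> positivity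
  obtain ⟨t, -, ht⟩ : ∃ t ∈ (Finset.univ : Finset (Finset (Fin m))),
      mu p t * (a t * (K / m) + b t * (K / Z) + c t * (1 / (8 * K * n))) ≤ mu p t * 3 ∧ 0 < mu p t := by
    by_contra hcon
    push Not at hcon
    have h1 : ∑ t : Finset (Fin m), mu p t * 3 = 3 := by
      rw [← Finset.sum_mul, mu_one]; ring
    have h2 : ∑ t : Finset (Fin m), mu p t *
        (a t * (K / m) + b t * (K / Z) + c t * (1 / (8 * K * n))) ≤ 3 := by
      have : ∀ t, mu p t * (a t * (K / m) + b t * (K / Z) + c t * (1 / (8 * K * n)))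
          = (mu p t * a t) * (K / m) + (mu p t * b t) * (K / Z) + (mu p t * c t) * (1 / (8 * K * n)) := by
        intro t; ring
      simp_rw [this, Finset.sum_add_distrib, ← Finset.sum_mul]
      have e1 : (∑ t, mu p t * a t) * (K / m) = 1 := by
        rw [Ea]; field_simp; linarith
      have e2 : (∑ t, mu p t * b t) * (K / Z) ≤ 1 := by
        rw [Eb, ← mul_div_assoc, div_le_one hZ0, mul_assoc, hpK]; linarith
      have e3 : (∑ t, mu p t * c t) * (1 / (8 * K * n)) ≤ 1 := by
        rw [mul_one_div, div_le_one (by positivity)]; linarith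
      linarith
    obtain ⟨t0, ht0⟩ : ∃ t0 : Finset (Fin m), 0 < mu p t0 := by
      by_contra hh
      push Not at hh
      have := Finset.sum_nonpos (s := Finset.univ) (fun t _ => hh t)
      rw [mu_one] at this; linarith
    have h3 : ∑ t : Finset (Fin m), mu p t * 3 < ∑ t : Finset (Fin m), mu p t *
        (a t * (K / m) + b t * (K / Z) + c t * (1 / (8 * K * n))) := by
      apply Finset.sum_lt_sum
      · intro t ht
        rcases (mu_nonneg p hp0 hp1 t).lt_or_eq with h | h
        · by_contra hx
          push Not at hx
          exact absurd (hcon t ht hx.le) (not_le.2 h)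
        · rw [← h]; simp
      · refine ⟨t0, Finset.mem_univ _, ?_⟩
        by_contra hx
        push Not at hx
        exact absurd (hcon t0 (Finset.mem_univ _) hx) (not_le.2 ht0)
    linarith
  have hle := le_of_mul_le_mul_left ht.1 ht.2
  have q1 : 0 ≤ a t * (K / m) := mul_nonneg (ha0 t) (by positivity)
  have q2 : 0 ≤ b t * (K / Z) := mul_nonneg (hb0 t) (by positivity)
  have q3 : 0 ≤ c t * (1 / (8 * K * n)) := mul_nonneg (hc0 t) (by positivity)
  refine ⟨t, ?_, ?_, ?_⟩
  · have : a t * (K / m) ≤ 3 := by linarith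
    rw [← mul_div_assoc, div_le_iff₀ hmr] at this; exact this
  · have : b t * (K / Z) ≤ 3 := by linarith
    rw [← mul_div_assoc, div_le_iff₀ hZ0] at this; exact this
  · have : c t * (1 / (8 * K * n)) ≤ 3 := by linarith
    rw [mul_one_div, div_le_iff₀ (by positivity)] at this; linarith

def IsC4Free {m n : ℕ} (E : Finset (Fin m × Fin n)) : Prop :=
  ∀ u u' v v', u ≠ u' → v ≠ v' → (u, v) ∈ E → (u, v') ∈ E → (u', v) ∈ E → (u', v') ∈ E → False

def Hrel {m n : ℕ} (t : Finset (Fin m)) (F : Finset (Fin m × Fin n)) (v v' : Fin n) : Prop :=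
  v ≠ v' ∧ ∃ u ∈ t, (u, v) ∈ F ∧ (u, v') ∈ F

noncomputable def wt {m n : ℕ} (t : Finset (Fin m)) (F : Finset (Fin m × Fin n)) (v : Fin n) : ℝ :=
  ((t.filter (fun u => (u, v) ∈ F)).card : ℝ)

noncomputable def dg {m n : ℕ} (F : Finset (Fin m × Fin n)) (v : Fin n) : ℝ :=
  ((Finset.univ.filter (fun u => (u, v) ∈ F)).card : ℝ)

def IsCont {m n : ℕ} (q : ℕ) (t : Finset (Fin m)) (Vg : Finset (Fin n)) (F : Finset (Fin m × Fin n))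
    (C : Finset (Fin n) → Finset (Fin n)) : Prop :=
  ∀ I ⊆ Vg, (∀ x ∈ I, ∀ y ∈ I, ¬ Hrel t F x y) →
    ∃ T ⊆ I, T.card ≤ q ∧ ∑ v ∈ C T, wt t F v ≤ 2 * (t.card : ℝ) ∧ I ⊆ T ∪ C T

noncomputable def cont {m n : ℕ} (q : ℕ) (t : Finset (Fin m)) (Vg : Finset (Fin n))
    (F : Finset (Fin m × Fin n)) : Finset (Fin n) → Finset (Fin n) :=
  if h : ∃ C, IsCont q t Vg F C then h.choose else fun _ => ∅

lemma cont_spec {m n : ℕ} (q : ℕ) (t : Finset (Fin m)) (Vg : Finset (Fin n))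
    (F : Finset (Fin m × Fin n)) (h : ∃ C, IsCont q t Vg F C) : IsCont q t Vg F (cont q t Vg F) := by
  rw [cont, dif_pos h]; exact h.choose_spec

noncomputable def fib {m n : ℕ} (T : Finset (Fin m × Fin n)) (u : Fin m) : Finset (Fin n) :=
  Finset.univ.filter (fun v => (u, v) ∈ T)

noncomputable def PP {m n : ℕ} (q : ℕ) (t : Finset (Fin m)) (Vg : Finset (Fin n))
    (F T : Finset (Fin m × Fin n)) : Finset (Fin m × Fin n) :=
  Finset.univ.filter (fun e => e.1 ∉ t ∧ e.2 ∈ cont q t Vg F (fib T e.1))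

noncomputable def fam {m n : ℕ} (s : ℝ) (P : Finset (Fin m × Fin n)) :
    Finset (Finset (Fin m × Fin n)) :=
  P.powerset.filter (fun G => ∑ e ∈ G, (s / m) * dg P e.2 ≤ 12 * m * s)

lemma dg_nonneg {m n : ℕ} (F : Finset (Fin m × Fin n)) (v : Fin n) : 0 ≤ dg F v :=
  Nat.cast_nonneg _

lemma wt_nonneg {m n : ℕ} (t : Finset (Fin m)) (F : Finset (Fin m × Fin n)) (v : Fin n) :
    0 ≤ wt t F v := Nat.cast_nonneg _

lemma sum_fib {m n : ℕ} (X : Finset (Fin m × Fin n)) (g : Fin n → ℝ) :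
    ∑ e ∈ X, g e.2 = ∑ v, dg X v * g v := by
  have h1 : ∑ e ∈ X, g e.2 = ∑ e : Fin m × Fin n, if e ∈ X then g e.2 else 0 := by simp
  rw [h1, Fintype.sum_prod_type_right]
  apply Finset.sum_congr rfl
  intro v _
  rw [dg, ← Finset.sum_filter]
  change ∑ a ∈ _, g v = _
  rw [Finset.sum_const, nsmul_eq_mul]

lemma fam_card {m n : ℕ} (hm : 0 < m) (s : ℝ) (hs : 0 < s) (hsn : s ^ 2 = n)
    (P : Finset (Fin m × Fin n)) : ((fam s P).card : ℝ) ≤ Real.exp (13 * m * s) := by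
  have hmr : (0:ℝ) < m := by exact_mod_cast hm
  refine (card_weighted P (fun e => (s / m) * dg P e.2) (12 * m * s)).trans ?_
  rw [Real.exp_le_exp]
  have h1 := sum_fib P (fun v => Real.exp (-((s / m) * dg P v)))
  rw [h1]
  have h2 : ∑ v : Fin n, dg P v * Real.exp (-((s / m) * dg P v)) ≤ ∑ v : Fin n, m / s := by
    apply Finset.sum_le_sum
    intro v _
    generalize dg P v = d
    rw [Real.exp_neg, ← div_eq_mul_inv, div_le_iff₀ (Real.exp_pos _)]
    have := Real.add_one_le_exp (s / m * d)
    calc d = m / s * (s / m * d) := by field_simp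
      _ ≤ _ := by gcongr; linarith
  have h3 : ∑ v : Fin n, (m:ℝ) / s = m * s := by
    simp
    rw [← hsn]; field_simp
  linarith

lemma decomp {m n : ℕ} (hm : 0 < m) (hn : 0 < n) (K q B : ℕ) (hK : 1 ≤ K) (hB : 1 ≤ B)
    (s : ℝ) (hs : 0 < s) (hsn : s ^ 2 = n) (hKm : (K:ℝ) ^ 5 * s ≤ 10 * m)
    (hBm : 24 * n * (K:ℝ) ^ 3 ≤ B * m) (hq : (n:ℝ) * (1 - 1 / B) ^ q < 1)
    (E : Finset (Fin m × Fin n)) (hE : IsC4Free E) :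
    ∃ (t : Finset (Fin m)) (Vg : Finset (Fin n)) (F T G : Finset (Fin m × Fin n)),
      (F.card : ℝ) ≤ 274 * m * s / K ∧ T.card ≤ q * m ∧ G ∈ fam s (PP q t Vg F T) ∧
      E = F ∪ T ∪ G := by
  have hmr : (0:ℝ) < m := by exact_mod_cast hm
  have hnr : (0:ℝ) < n := by exact_mod_cast hn
  have hKr : (1:ℝ) ≤ K := by exact_mod_cast hK
  have hBr : (1:ℝ) ≤ B := by exact_mod_cast hB
  have hK5 : (1:ℝ) ≤ K ^ 5 := one_le_pow₀ hKr
  have hn10 : (n:ℝ) * K ^ 5 ≤ 10 * m * s := by rw [← hsn]; nlinarith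
  have hn10' : (n:ℝ) ≤ 10 * m * s := by nlinarith
  have hZ : (E.card : ℝ) ≤ 11 * m * s := by
    have := kst E hE s hs.le hsn; linarith
  obtain ⟨t, ht1, ht2, ht3⟩ := exists_t hm hn E K hK (11 * m * s) (by positivity) hZ
  set Vg : Finset (Fin n) := Finset.univ.filter
    (fun v => dg E v ≤ 2 * K * wt t E v ∧ m / (s * K) ≤ dg E v) with hVg
  set F := E.filter (fun e => e.1 ∈ t ∨ e.2 ∉ Vg) with hF
  have hFE : F ⊆ E := Finset.filter_subset _ _
  have hwF : ∀ v, wt t F v = wt t E v := by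
    intro v
    unfold wt
    congr 2
    apply Finset.filter_congr
    intro u hu
    simp [hF, hu]
  have hF4 : IsC4Free F := fun u u' v v' h1 h2 a b c d =>
    hE u u' v v' h1 h2 (hFE a) (hFE b) (hFE c) (hFE d)
  -- size of F
  have hFc : (F.card : ℝ) ≤ 274 * m * s / K := by
    have h1 : F.card ≤ (E.filter (fun e => e.1 ∈ t)).card + (E.filter (fun e => e.2 ∉ Vg)).card := by
      rw [hF, Finset.filter_or]; exact Finset.card_union_le _ _
    have h2 : ((E.filter (fun e => e.2 ∉ Vg)).card : ℝ) ≤ 24 * K * n + n * (m / (s * K)) := by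
      have e1 : ((E.filter (fun e => e.2 ∉ Vg)).card : ℝ) =
          ∑ e ∈ E, (if e.2 ∉ Vg then (1:ℝ) else 0) := by
        rw [Finset.card_filter]; push_cast; rfl
      rw [e1, sum_fib E (fun v => if v ∉ Vg then (1:ℝ) else 0)]
      have e2 : (n:ℝ) * (m / (s * K)) = ∑ v : Fin n, (m / (s * K) : ℝ) := by simp
      rw [e2]
      refine le_trans ?_ (add_le_add ht3 le_rfl)
      rw [← Finset.sum_add_distrib]
      apply Finset.sum_le_sum
      intro v _
      have e3 : (0:ℝ) ≤ m / (s * K) := by positivity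
      by_cases hv : v ∈ Vg
      · simp only [hv, not_true, if_false, mul_zero]
        split_ifs
        · exact add_nonneg (Nat.cast_nonneg _) e3
        · linarith
      · rw [if_pos hv, mul_one]
        by_cases hf : dg E v ≤ 2 * K * wt t E v
        · have : ¬ (m / (s * K) ≤ dg E v) := fun h => hv (by simp [hVg, hf, h])
          split_ifs
          · exact le_add_of_nonneg_right e3
          · linarith
        · push Not at hf
          unfold dg wt at hf
          rw [if_pos hf]
          exact le_add_of_nonneg_right e3
    have h3 : ((E.filter (fun e => e.1 ∈ t)).card : ℝ) ≤ 33 * m * s / K := by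
      rw [le_div_iff₀ (by linarith)]; linarith
    have h4 : (n:ℝ) * (m / (s * K)) = m * s / K := by
      rw [← hsn]; field_simp
    have h5 : 24 * K * (n:ℝ) ≤ 240 * m * s / K := by
      rw [le_div_iff₀ (by linarith)]
      have : (K:ℝ) ^ 2 ≤ K ^ 5 := pow_le_pow_right₀ hKr (by norm_num)
      nlinarith
    have h6 : (F.card : ℝ) ≤ (E.filter (fun e => e.1 ∈ t)).card + (E.filter (fun e => e.2 ∉ Vg)).card := by
      exact_mod_cast h1
    have h7 : 33 * m * s / K + (240 * m * s / K + m * s / K) = 274 * m * s / (K:ℝ) := by ring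
    linarith
  -- containers
  have hC : IsCont q t Vg F (cont q t Vg F) := by
    apply cont_spec
    apply kw (Hrel t F) (wt t F) (2 * (t.card : ℝ)) B hB Vg.card Vg q rfl
    · refine lt_of_le_of_lt ?_ hq
      have h01 : 0 ≤ 1 - 1 / (B:ℝ) := by
        rw [sub_nonneg, div_le_one (by linarith)]; exact hBr
      have : (Vg.card : ℝ) ≤ n := by
        exact_mod_cast (Finset.card_le_univ Vg).trans (by simp)
      gcongr
    · intro A hA hAw
      have := density (fun u v => (u, v) ∈ F) hF4 t A (m / (2 * s * K ^ 2)) B (by positivity) ?_ ?_ ?_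
      · obtain ⟨v, hv, h⟩ := this
        refine ⟨v, hv, ?_⟩
        convert h using 4
        ext v'
        simp only [Finset.mem_filter, Hrel]
      · intro v hv
        have hv' := hA hv
        simp only [hVg, Finset.mem_filter, Finset.mem_univ, true_and] at hv'
        have : m / (2 * s * K ^ 2) ≤ wt t F v := by
          rw [hwF]
          have h1 := hv'.2.trans hv'.1
          rw [div_le_iff₀ (by positivity)] at h1 ⊢
          linarith
        convert this using 1
        unfold wt; congr!
      · convert hAw using 2
        unfold wt; congr!
      · have h1 : (B:ℝ) * (m / (2 * s * K ^ 2)) ^ 2 = (B * m) * (m / (4 * n * K ^ 4)) := by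
          rw [← hsn]; field_simp; ring
        rw [h1]
        have h2 : (24 * n * (K:ℝ) ^ 3) * (m / (4 * n * K ^ 4)) ≤ (B * m) * (m / (4 * n * K ^ 4)) := by
          gcongr
        have h3 : (24 * n * (K:ℝ) ^ 3) * (m / (4 * n * K ^ 4)) = 6 * m / K := by
          field_simp; ring
        have h4 : (t.card : ℝ) ≤ 3 * m / K := by
          rw [le_div_iff₀ (by linarith)]; exact ht1
        have h5 : 2 * (3 * m / (K:ℝ)) = 6 * m / K := by ring
        linarith
  have hT : ∀ u, u ∉ t → ∃ T ⊆ Finset.univ.filter (fun v => v ∈ Vg ∧ (u, v) ∈ E), T.card ≤ q ∧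
      ∑ v ∈ cont q t Vg F T, wt t F v ≤ 2 * (t.card : ℝ) ∧
      Finset.univ.filter (fun v => v ∈ Vg ∧ (u, v) ∈ E) ⊆ T ∪ cont q t Vg F T := by
    intro u hu
    apply hC
    · intro v hv; simp at hv; exact hv.1
    · rintro x hx y hy ⟨hxy, u', hu', h1, h2⟩
      simp only [Finset.mem_filter, Finset.mem_univ, true_and] at hx hy
      exact hE u u' x y (by rintro rfl; exact hu hu') hxy hx.2 hy.2 (hFE h1) (hFE h2)
  choose! Tf hT1 hT2 hT3 hT4 using hT
  set T : Finset (Fin m × Fin n) := Finset.univ.filter (fun e => e.1 ∉ t ∧ e.2 ∈ Tf e.1) with hTdef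
  have hfib : ∀ u, u ∉ t → fib T u = Tf u := by
    intro u hu
    ext v
    simp [fib, hTdef, hu]
  set G := E.filter (fun e => e.1 ∉ t ∧ e.2 ∈ Vg ∧ e.2 ∉ Tf e.1) with hG
  refine ⟨t, Vg, F, T, G, hFc, ?_, ?_, ?_⟩
  · rw [Finset.card_eq_sum_card_fiberwise (f := Prod.fst) (t := Finset.univ) (by simp)]
    calc _ ≤ ∑ u : Fin m, q := by
          apply Finset.sum_le_sum
          intro u _
          by_cases hu : u ∈ t
          · have : T.filter (fun e => e.1 = u) = ∅ := by
              rw [Finset.filter_eq_empty_iff]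
              rintro ⟨a, b⟩ he rfl
              simp [hTdef, hu] at he
            rw [this]; simp
          · refine le_trans ?_ (hT2 u hu)
            apply Finset.card_le_card_of_injOn Prod.snd
            · rintro ⟨a, b⟩ h
              simp [hTdef] at h
              obtain ⟨h, rfl⟩ := h
              simpa using h.2
            · rintro ⟨a, b⟩ h ⟨a', b'⟩ h' hh
              simp at h h' hh
              ext <;> simp [h.2, h'.2, hh]
      _ = q * m := by simp [mul_comm]
  · rw [fam, Finset.mem_filter, Finset.mem_powerset]
    set P := PP q t Vg F T with hP
    refine ⟨?_, ?_⟩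
    · rintro ⟨u, v⟩ he
      simp only [hG, Finset.mem_filter] at he
      obtain ⟨h1, h2, h3, h4⟩ := he
      simp only [hP, PP, Finset.mem_filter, Finset.mem_univ, true_and]
      refine ⟨h2, ?_⟩
      rw [hfib u h2]
      have := hT4 u h2 (Finset.mem_filter.2 ⟨Finset.mem_univ v, h3, h1⟩)
      rcases Finset.mem_union.1 this with h | h
      · exact absurd h h4
      · exact h
    · rw [← Finset.mul_sum, sum_fib G (fun v => dg P v)]
      have h1 : ∑ v, dg G v * dg P v ≤ ∑ v, dg P v * (2 * K * wt t F v) := by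
        apply Finset.sum_le_sum
        intro v _
        rw [mul_comm]
        apply mul_le_mul_of_nonneg_left _ (dg_nonneg _ _)
        by_cases hv : v ∈ Vg
        · have hv' := hv
          simp only [hVg, Finset.mem_filter, Finset.mem_univ, true_and] at hv'
          rw [hwF]
          refine le_trans ?_ hv'.1
          unfold dg
          have hGE : G ⊆ E := Finset.filter_subset _ _
          exact_mod_cast Finset.card_le_card (fun u hu => by
            simp only [Finset.mem_filter, Finset.mem_univ, true_and] at hu ⊢
            exact hGE hu)
        · have : dg G v = 0 := by
            unfold dg
            simp [hG, hv]
          rw [this]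
          have := wt_nonneg t F v
          positivity
      have h2 : ∑ v, dg P v * (2 * K * wt t F v) ≤ 12 * m ^ 2 := by
        rw [← sum_fib P (fun v => 2 * K * wt t F v)]
        have e1 : ∑ e ∈ P, 2 * K * wt t F e.2 =
            ∑ e : Fin m × Fin n, if e ∈ P then 2 * K * wt t F e.2 else 0 := by simp
        rw [e1, Fintype.sum_prod_type]
        calc _ ≤ ∑ u : Fin m, 2 * (K:ℝ) * (2 * (t.card : ℝ)) := by
              apply Finset.sum_le_sum
              intro u _
              have hK0 : 0 ≤ 2 * (K:ℝ) := by positivity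
              by_cases hu : u ∈ t
              · have : ∀ v, (u, v) ∉ P := by
                  intro v; simp [hP, PP, hu]
                simp only [this, if_false, Finset.sum_const_zero]
                exact mul_nonneg hK0 (mul_nonneg (by norm_num) (Nat.cast_nonneg _))
              · have : ∀ v, (u, v) ∈ P ↔ v ∈ cont q t Vg F (Tf u) := by
                  intro v; simp [hP, PP, hu, hfib]
                simp only [this]
                rw [← Finset.sum_filter, Finset.filter_mem_eq_inter, Finset.univ_inter,
                  ← Finset.mul_sum]
                exact mul_le_mul_of_nonneg_left (hT3 u hu) hK0
          _ = 4 * m * (t.card * K) := by simp; ring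
          _ ≤ 4 * m * (3 * m) := mul_le_mul_of_nonneg_left ht1 (by positivity)
          _ = _ := by ring
      calc s / m * ∑ v, dg G v * dg P v ≤ s / m * (12 * m ^ 2) := by
            gcongr; exact h1.trans h2
        _ = _ := by field_simp
  · ext ⟨u, v⟩
    simp only [Finset.mem_union, hF, hG, hTdef, Finset.mem_filter, Finset.mem_univ, true_and]
    constructor
    · intro h
      by_cases h1 : u ∈ t
      · tauto
      · tauto
    · rintro ((h | h) | h)
      · exact h.1
      · have := hT1 u h.1 h.2
        simp at this; exact this.2
      · exact h.1

lemma small_card {m n : ℕ} (K : ℕ) (hmn : (m:ℝ) * n ≤ Real.exp (24 * K)) (M : ℝ) :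
    (((Finset.univ : Finset (Fin m × Fin n)).powerset.filter
      (fun F => ∑ _e ∈ F, (24 * K : ℝ) ≤ 24 * K * M)).card : ℝ) ≤ Real.exp (24 * K * M + 1) := by
  refine (card_weighted _ (fun _ => (24 * K : ℝ)) (24 * K * M)).trans ?_
  rw [Real.exp_le_exp]
  have : ∑ e : Fin m × Fin n, Real.exp (-(24 * K : ℝ)) ≤ 1 := by
    rw [Finset.sum_const, nsmul_eq_mul, Real.exp_neg, ← div_eq_mul_inv, div_le_one (Real.exp_pos _)]
    simpa using hmn
  linarith

lemma count_bound {m n : ℕ} (hm : 0 < m) (hn : 0 < n) (K q B : ℕ) (hK : 1 ≤ K) (hB : 1 ≤ B)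
    (s : ℝ) (hs : 0 < s) (hsn : s ^ 2 = n) (hKm : (K:ℝ) ^ 5 * s ≤ 10 * m)
    (hBm : 24 * n * (K:ℝ) ^ 3 ≤ B * m) (hq : (n:ℝ) * (1 - 1 / B) ^ q < 1)
    (hmn : (m:ℝ) * n ≤ Real.exp (24 * K)) :
    (c4FreeCount m n : ℝ) ≤ Real.exp (m + n + (24 * K * (274 * m * s / K) + 1)
      + (24 * K * (q * m) + 1) + 13 * m * s) := by
  have hKr : (1:ℝ) ≤ K := by exact_mod_cast hK
  set FF := (Finset.univ : Finset (Fin m × Fin n)).powerset.filter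
      (fun F => ∑ _e ∈ F, (24 * K : ℝ) ≤ 24 * K * (274 * m * s / K)) with hFF
  set TT := (Finset.univ : Finset (Fin m × Fin n)).powerset.filter
      (fun F => ∑ _e ∈ F, (24 * K : ℝ) ≤ 24 * K * (q * m)) with hTT
  set idx := (Finset.univ : Finset (Finset (Fin m))) ×ˢ (Finset.univ : Finset (Finset (Fin n))) ×ˢ
    FF ×ˢ TT with hidx
  set f : Finset (Fin m) × Finset (Fin n) × Finset (Fin m × Fin n) × Finset (Fin m × Fin n) →
      Finset (Finset (Fin m × Fin n)) := fun x =>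
    (fam s (PP q x.1 x.2.1 x.2.2.1 x.2.2.2)).image (fun G => x.2.2.1 ∪ x.2.2.2 ∪ G) with hf
  have hmem : ∀ (F : Finset (Fin m × Fin n)) (M : ℝ), (F.card : ℝ) ≤ M →
      ∑ _e ∈ F, (24 * K : ℝ) ≤ 24 * K * M := by
    intro F M h
    rw [Finset.sum_const, nsmul_eq_mul, mul_comm]
    gcongr
  have hsub : c4FreeCount m n ≤ (idx.biUnion f).card := by
    apply Finset.card_le_card
    intro E hE
    rw [Finset.mem_filter] at hE
    have hE4 : IsC4Free E := fun u u' v v' h1 h2 a b c d => hE.2 ⟨u, u', v, v', h1, h2, a, b, c, d⟩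
    obtain ⟨t, Vg, F, T, G, h1, h2, h3, h4⟩ := decomp hm hn K q B hK hB s hs hsn hKm hBm hq E hE4
    rw [Finset.mem_biUnion]
    refine ⟨(t, Vg, F, T), ?_, ?_⟩
    · simp only [hidx, Finset.mem_product, Finset.mem_univ, true_and]
      refine ⟨?_, ?_⟩
      · simp only [hFF, Finset.mem_filter, Finset.powerset_univ, Finset.mem_univ, true_and]
        exact hmem F _ h1
      · simp only [hTT, Finset.mem_filter, Finset.powerset_univ, Finset.mem_univ, true_and]
        exact hmem T _ (by exact_mod_cast h2)
    · simp only [hf, Finset.mem_image]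
      exact ⟨G, h3, h4.symm⟩
  have hb : (idx.biUnion f).card ≤ idx.card * ⌊Real.exp (13 * m * s)⌋₊ := by
    apply Finset.card_biUnion_le_card_mul
    intro x _
    refine Finset.card_image_le.trans ?_
    exact Nat.le_floor (fam_card hm s hs hsn _)
  have hidxc : idx.card = 2 ^ m * (2 ^ n * (FF.card * TT.card)) := by
    simp [hidx, Finset.card_product]
  have h2e : ∀ k : ℕ, (2:ℝ) ^ k ≤ Real.exp k := by
    intro k
    have : (2:ℝ) ≤ Real.exp 1 := by have := Real.add_one_le_exp 1; linarith
    calc (2:ℝ) ^ k ≤ (Real.exp 1) ^ k := by gcongr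
      _ = Real.exp k := by rw [← Real.exp_nat_mul]; simp
  have hc1 : (FF.card : ℝ) ≤ _ := small_card K hmn _
  have hc2 : (TT.card : ℝ) ≤ _ := small_card K hmn _
  calc (c4FreeCount m n : ℝ) ≤ ((idx.card * ⌊Real.exp (13 * m * s)⌋₊ : ℕ) : ℝ) := by
        exact_mod_cast hsub.trans hb
    _ = (2 ^ m * (2 ^ n * (FF.card * TT.card))) * (⌊Real.exp (13 * m * s)⌋₊ : ℝ) := by
        rw [hidxc]; push_cast; ring
    _ ≤ (Real.exp m * (Real.exp n * (Real.exp (24 * K * (274 * m * s / K) + 1) *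
          Real.exp (24 * K * (q * m) + 1)))) * Real.exp (13 * m * s) := by
        gcongr
        · exact h2e m
        · exact h2e n
        · exact Nat.floor_le (Real.exp_pos _).le
    _ = _ := by
        simp only [← Real.exp_add]
        congr 1; ring

set_option maxHeartbeats 2000000 in
theorem count_c4free_bipartite :
    ∃ C : ℝ, 0 < C ∧ ∀ m n : ℕ, 0 < m → m ≤ n →
      (n : ℝ) ^ ((11 : ℝ)/12) * (Real.log n) ^ 5 ≤ (m : ℝ) →
      (c4FreeCount m n : ℝ) ≤ 2 ^ (C * (m : ℝ) * (n : ℝ) ^ ((1 : ℝ)/2)) := by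
  refine ⟨160000, by norm_num, ?_⟩
  intro m n hm hmn hyp
  have hn : 0 < n := lt_of_lt_of_le hm hmn
  have hmr : (1:ℝ) ≤ m := by exact_mod_cast hm
  have hnr : (1:ℝ) ≤ n := by exact_mod_cast hn
  have hmnr : (m:ℝ) ≤ n := by exact_mod_cast hmn
  set s : ℝ := (n:ℝ) ^ ((1:ℝ)/2) with hsdef
  have hs1 : 1 ≤ s := Real.one_le_rpow hnr (by norm_num)
  have hsn : s ^ 2 = n := by
    rw [hsdef, ← Real.rpow_natCast, ← Real.rpow_mul (by linarith)]; norm_num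
  set r : ℝ := (n:ℝ) ^ ((1:ℝ)/12) with hr
  have hr1 : 1 ≤ r := Real.one_le_rpow hnr (by norm_num)
  have hr12 : r ^ 12 = n := by
    rw [hr, ← Real.rpow_natCast, ← Real.rpow_mul (by linarith)]; norm_num
  have hrs : r ^ 5 * s = (n:ℝ) ^ ((11:ℝ)/12) := by
    rw [hr, hsdef, ← Real.rpow_natCast, ← Real.rpow_mul (by linarith), ← Real.rpow_add (by linarith)]
    norm_num
  set K : ℕ := ⌊r⌋₊ with hKdef
  have hK : 1 ≤ K := Nat.le_floor (by simpa using hr1)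
  have hKr : (1:ℝ) ≤ K := by exact_mod_cast hK
  have hKle : (K:ℝ) ≤ r := Nat.floor_le (by linarith)
  have hKlt : r < K + 1 := Nat.lt_floor_add_one r
  have hKm : (K:ℝ) ^ 5 * s ≤ 10 * m := by
    have h1 : (K:ℝ) ^ 5 * s ≤ r ^ 5 * s := by gcongr
    by_cases h3 : 3 ≤ n
    · have hl : 1 ≤ Real.log n := by
        rw [Real.le_log_iff_exp_le (by linarith)]
        have h3r : (3:ℝ) ≤ n := by exact_mod_cast h3
        have := Real.exp_one_lt_d9
        linarith
      have hl5 : 1 ≤ Real.log n ^ 5 := one_le_pow₀ hl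
      have : (n:ℝ) ^ ((11:ℝ)/12) ≤ m := by
        refine le_trans ?_ hyp
        exact le_mul_of_one_le_right (by positivity) hl5
      linarith
    · have h2 : (n:ℝ) ≤ 2 := by exact_mod_cast (by omega : n ≤ 2)
      have : (n:ℝ) ^ ((11:ℝ)/12) ≤ n := by
        calc (n:ℝ) ^ ((11:ℝ)/12) ≤ (n:ℝ) ^ (1:ℝ) := Real.rpow_le_rpow_of_exponent_le hnr (by norm_num)
          _ = n := Real.rpow_one _
      linarith
  have hnK : (n:ℝ) ≤ 2 ^ (12 * K) := by
    have h1 : r ≤ 2 ^ K := by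
      have : (K:ℝ) + 1 ≤ 2 ^ K := by exact_mod_cast Nat.lt_two_pow_self (n := K)
      linarith
    calc (n:ℝ) = r ^ 12 := hr12.symm
      _ ≤ (2 ^ K) ^ 12 := by gcongr
      _ = _ := by rw [← pow_mul, mul_comm]
  have h2e : (2:ℝ) < Real.exp 1 := by have := Real.exp_one_gt_d9; linarith
  have hnK' : (n:ℝ) < Real.exp (12 * K) := by
    calc (n:ℝ) ≤ 2 ^ (12 * K) := hnK
      _ < (Real.exp 1) ^ (12 * K) := by gcongr
      _ = _ := by rw [← Real.exp_nat_mul]; push_cast; simp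
  have hmn24 : (m:ℝ) * n ≤ Real.exp (24 * K) := by
    calc (m:ℝ) * n ≤ Real.exp (12 * K) * Real.exp (12 * K) := by
          apply mul_le_mul <;> linarith [Real.exp_pos (12 * (K:ℝ))]
      _ = _ := by rw [← Real.exp_add]; ring_nf
  set B : ℕ := ⌈24 * n * (K:ℝ) ^ 3 / m⌉₊ with hBdef
  have hpos : 0 < 24 * n * (K:ℝ) ^ 3 / m := by positivity
  have hB : 1 ≤ B := Nat.ceil_pos.2 hpos
  have hBr : (1:ℝ) ≤ B := by exact_mod_cast hB
  have hBm : 24 * n * (K:ℝ) ^ 3 ≤ B * m := by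
    rw [← div_le_iff₀ (by linarith)]; exact Nat.le_ceil _
  have hBm2 : (B:ℝ) * m ≤ 25 * n * K ^ 3 := by
    have h1 : (B:ℝ) < 24 * n * (K:ℝ) ^ 3 / m + 1 := Nat.ceil_lt_add_one hpos.le
    have h2 : (B:ℝ) * m ≤ (24 * n * (K:ℝ) ^ 3 / m + 1) * m := by gcongr
    have h3 : (24 * n * (K:ℝ) ^ 3 / m + 1) * m = 24 * n * (K:ℝ) ^ 3 + m := by field_simp
    have h4 : (1:ℝ) ≤ K ^ 3 := one_le_pow₀ hKr
    nlinarith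
  have hq : (n:ℝ) * (1 - 1 / B) ^ (12 * K * B) < 1 := by
    have h0 : 0 ≤ 1 - 1 / (B:ℝ) := by
      rw [sub_nonneg, div_le_one (by linarith)]; exact hBr
    have h1 : 1 - 1 / (B:ℝ) ≤ Real.exp (-(1 / B)) := by
      have := Real.add_one_le_exp (-(1 / (B:ℝ))); linarith
    have h2 : (1 - 1 / (B:ℝ)) ^ (12 * K * B) ≤ Real.exp (-(12 * K)) := by
      calc (1 - 1 / (B:ℝ)) ^ (12 * K * B) ≤ (Real.exp (-(1 / B))) ^ (12 * K * B) := by gcongr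
        _ = _ := by
          rw [← Real.exp_nat_mul]; push_cast; congr 1; field_simp
    calc (n:ℝ) * (1 - 1 / B) ^ (12 * K * B) ≤ n * Real.exp (-(12 * K)) := by gcongr
      _ < Real.exp (12 * K) * Real.exp (-(12 * K)) := by gcongr
      _ = 1 := by rw [← Real.exp_add]; simp
  have hcount := count_bound hm hn K (12 * K * B) B hK hB s (by linarith) hsn hKm hBm hq hmn24
  have hK5 : (1:ℝ) ≤ K ^ 5 := one_le_pow₀ hKr
  have hn10 : (n:ℝ) * K ^ 5 ≤ 10 * m * s := by rw [← hsn]; nlinarith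
  have hn10' : (n:ℝ) ≤ 10 * m * s := by nlinarith
  have hms : (m:ℝ) ≤ m * s := by nlinarith
  have e1 : 24 * K * (274 * m * s / K) = 6576 * (m * s) := by field_simp; ring
  have e2 : 24 * (K:ℝ) * ((12 * K * B : ℕ) * m) ≤ 72000 * (m * s) := by
    push_cast
    calc 24 * (K:ℝ) * (12 * K * B * m) = 288 * K ^ 2 * (B * m) := by ring
      _ ≤ 288 * K ^ 2 * (25 * n * K ^ 3) := by gcongr
      _ = 7200 * (n * K ^ 5) := by ring
      _ ≤ 72000 * (m * s) := by linarith
  refine hcount.trans ?_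
  have h4 : Real.exp (80000 * (m * s)) ≤ 2 ^ (160000 * (m:ℝ) * s) := by
    rw [Real.rpow_def_of_pos (by norm_num), Real.exp_le_exp]
    have := Real.log_two_gt_d9
    have hp : 0 ≤ (m:ℝ) * s := by linarith
    have h5 := mul_le_mul_of_nonneg_right (show 80000 ≤ Real.log 2 * 160000 by linarith) hp
    calc 80000 * (m * s) ≤ Real.log 2 * 160000 * (m * s) := h5
      _ = _ := by ring
  refine le_trans ?_ h4
  rw [Real.exp_le_exp, e1]
  linarith
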